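/- arXiv:2106.09261 — 3 statements merged into one kernel-verified Lean document; each statement's English description precedes it below -/
import Mathlib

section
/- Let υ > 0 and let π_i > π_{i*} ≥ 0 be two type parameters. Let s_i, s_{i*} ≥ 0 be the total (proportion-weighted) encrypted dataset sizes associated with the two types, with gains G_i = υ·√(s_i) and G_{i*} = υ·√(s_{i*}), and let C_i, C_{i*} be arbitrary real costs. If the pair of IC constraints holds, namely π_i·G_i − C_i ≥ π_i·G_{i*} − C_{i*} and π_{i*}·G_{i*} − C_{i*} ≥ π_{i*}·G_i − C_i, then s_i ≥ s_{i*}. -/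
/-- Lemma 1 (forward direction): with the strictly increasing square-root gain
`G(s) = υ·√s` (`υ > 0`), a strictly higher MAP type is offered a larger total
encrypted dataset size under any incentive-compatible contract. -/
theorem ic_higher_type_larger_dataset
    (υ πi πi' si si' Gi Gi' Ci Ci' : ℝ)
    (hυ : υ > 0)
    (hπ : πi > πi') (hπ' : πi' ≥ 0)
    (hsi : si ≥ 0) (hsi' : si' ≥ 0)
    (hGi : Gi = υ * Real.sqrt si) (hGi' : Gi' = υ * Real.sqrt si')
    (hIC1 : πi * Gi - Ci ≥ πi * Gi' - Ci')
    (hIC2 : πi' * Gi' - Ci' ≥ πi' * Gi - Ci) :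
    si ≥ si' := by
  by_contra! h
  have hG : Gi < Gi' := by
    rw [hGi, hGi']
    exact mul_lt_mul_of_pos_left (Real.sqrt_lt_sqrt hsi h) hυ
  -- Adding the two IC constraints cancels the costs: `(πi - πi') * (Gi - Gi') ≥ 0`.
  nlinarith [mul_pos (sub_pos.mpr hπ) (sub_pos.mpr hG)]
end

section
/- Let I ≥ 2 and let π_1 ≤ π_2 ≤ … ≤ π_I be real type parameters, G_1 ≤ G_2 ≤ … ≤ G_I real gains, and C_1, …, C_I real costs. Assume the local downward incentive constraints (LDIC) hold between every pair of consecutive types: π_i·G_i − C_i ≥ π_i·G_{i−1} − C_{i−1} for all i ∈ {2, …, I}. Then all downward incentive-compatibility constraints hold: for every pair of indices j < i, π_i·G_i − C_i ≥ π_i·G_j − C_j. -/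
/-!
Fix a type `i`. Each consecutive constraint says `π k * (G k - G (k - 1)) ≥ C k - C (k - 1)`; since
gains are nondecreasing and `π i ≥ π k` for `k ≤ i`, it persists with `π i` in place of `π k`.
Adding these inequalities for `j < k ≤ i` telescopes to the downward constraint between `i` and `j`.
-/

/-- Lemma 2 (downward-IC part): when the MAP's types are ordered increasingly
and the offered gains are nondecreasing in the type, the local downward
incentive constraints (LDIC) between consecutive types imply all downward
incentive-compatibility constraints. -/
theorem ldic_implies_dic
    (I : ℕ) (hI : 2 ≤ I)
    (π G C : ℕ → ℝ)
    (hπ : ∀ i j, 1 ≤ i → i ≤ j → j ≤ I → π i ≤ π j)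
    (hG : ∀ i j, 1 ≤ i → i ≤ j → j ≤ I → G i ≤ G j)
    (hLDIC : ∀ i, 2 ≤ i → i ≤ I → π i * G i - C i ≥ π i * G (i - 1) - C (i - 1)) :
    ∀ i j, 1 ≤ j → j < i → i ≤ I → π i * G i - C i ≥ π i * G j - C j := by
  intro i j hj hji hi
  -- For a fixed type `i`, the payoff `π i * G k - C k` is nondecreasing in the contract `k ≤ i`.
  have chain : ∀ k, j ≤ k → k ≤ i → π i * G j - C j ≤ π i * G k - C k := by
    intro k hjk
    induction k, hjk using Nat.le_induction with
    | base => intro _; exact le_rfl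
    | succ k hjk ih =>
      intro hki
      have hprev := ih (by omega)
      have hloc := hLDIC (k + 1) (by omega) (by omega)
      rw [Nat.add_sub_cancel] at hloc
      have hp := hπ (k + 1) i (by omega) hki hi
      have hg := hG k (k + 1) (by omega) (by omega) (by omega)
      -- The higher type `i` values the gain increment at least as much as type `k + 1` does.
      have hmul := mul_le_mul_of_nonneg_right hp (sub_nonneg.mpr hg)
      linarith
  exact chain i hji.le le_rfl
end

section
/- For every integer N ≥ 2, ∫₀^{1−1/N} exp(∑_{n=1}^{N−1} vⁿ/n) dv + (1/N)·exp(∑_{n=1}^{N−1} 1/n) ≤ log N + e, where e = exp(1) and log denotes the natural logarithm. -/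
/-!
The partial sums of `∑ vⁿ/n = -log (1 - v)` are below the full sum for `0 ≤ v < 1`, so the
integrand is at most `(1 - v)⁻¹`, whose integral over `[0, 1 - 1/N]` is exactly `log N`.
The remaining term is at most `e`, since `H_{N-1} ≤ 1 + log (N - 1) ≤ 1 + log N`.
-/

open Finset intervalIntegral

lemma exp_sum_pow_div_le_inv (M : ℕ) {v : ℝ} (h0 : 0 ≤ v) (h1 : v < 1) :
    Real.exp (∑ n ∈ Finset.Icc 1 M, v ^ n / (n : ℝ)) ≤ (1 - v)⁻¹ := by
  have hs := Real.hasSum_pow_div_log_of_abs_lt_one (x := v) (by rwa [abs_of_nonneg h0])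
  have hle : ∑ n ∈ Finset.Icc 1 M, v ^ n / (n : ℝ) ≤ -Real.log (1 - v) := by
    have h := sum_le_hasSum (Finset.range M) (fun i _ => by positivity) hs
    have he := Finset.sum_Ico_add' (fun n : ℕ => v ^ n / (n : ℝ)) 0 M 1
    push_cast at he
    rw [Finset.range_eq_Ico, he] at h
    exact h
  calc _ ≤ Real.exp (-Real.log (1 - v)) := Real.exp_le_exp.mpr hle
    _ = (1 - v)⁻¹ := by rw [Real.exp_neg, Real.exp_log (by linarith)]

lemma exp_sum_one_div_le {N : ℕ} (hN : 2 ≤ N) :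
    Real.exp (∑ n ∈ Finset.Icc 1 (N - 1), (1 : ℝ) / (n : ℝ)) ≤ N * Real.exp 1 := by
  have hpos : (0 : ℝ) < N := by positivity
  have h := harmonic_le_one_add_log (N - 1)
  rw [harmonic_eq_sum_Icc] at h
  push_cast at h
  have hlog : Real.log ((N - 1 : ℕ) : ℝ) ≤ Real.log N :=
    Real.log_le_log (by exact_mod_cast (by omega : 0 < N - 1)) (by exact_mod_cast Nat.sub_le N 1)
  calc _ ≤ Real.exp (Real.log N + 1) := by
        apply Real.exp_le_exp.mpr
        simp only [one_div]
        linarith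
    _ = N * Real.exp 1 := by rw [Real.exp_add, Real.exp_log hpos]

/-- The core analytic bound in the complexity analysis (Theorem 3):
`∫₀^{1−1/N} exp(∑_{n=1}^{N−1} vⁿ/n) dv + (1/N)·exp(H_{N−1}) ≤ log N + e`. -/
theorem best_response_step_bound
    (N : ℕ) (hN : 2 ≤ N) :
    (∫ v in (0 : ℝ)..(1 - 1 / (N : ℝ)),
        Real.exp (∑ n ∈ Finset.Icc 1 (N - 1), v ^ n / (n : ℝ)))
      + (1 / (N : ℝ)) * Real.exp (∑ n ∈ Finset.Icc 1 (N - 1), (1 : ℝ) / (n : ℝ))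
      ≤ Real.log (N : ℝ) + Real.exp 1 := by
  have hpos : (0 : ℝ) < N := by positivity
  have hinv : (0 : ℝ) < 1 / N := by positivity
  have hb : (0 : ℝ) ≤ 1 - 1 / N := by
    rw [sub_nonneg, div_le_one hpos]
    exact_mod_cast (by omega : 1 ≤ N)
  have hint : ∫ v in (0 : ℝ)..(1 - 1 / (N : ℝ)), (1 - v)⁻¹ = Real.log N := by
    rw [integral_comp_sub_left (fun x : ℝ => x⁻¹) 1,
      integral_inv_of_pos (by simpa using hpos) (by norm_num)]
    simp
  refine add_le_add ?_ ?_
  · rw [← hint]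
    refine integral_mono_on hb ?_ ?_ ?_
    · exact Continuous.intervalIntegrable (by fun_prop) _ _
    · refine ContinuousOn.intervalIntegrable (ContinuousOn.inv₀ (by fun_prop) fun v hv => ?_)
      rw [Set.uIcc_of_le hb] at hv
      linarith [hv.2]
    · intro v hv
      exact exp_sum_pow_div_le_inv _ hv.1 (by linarith [hv.2])
  · calc _ ≤ 1 / (N : ℝ) * (N * Real.exp 1) := by gcongr; exact exp_sum_one_div_le hN
      _ = Real.exp 1 := by field_simp
end
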